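/- For all nonnegative integers m_1, m_2, m_3, m_4, m_5, the monomial M = x_1^{m_1}·ζ_1^{m_2}·ϑ^{m_3}·η_1^{m_4}·η_2^{m_5} is a weight vector of weight m_3·λ_3 + (m_1+m_2)·λ_4: H_1(M) = 0, H_2(M) = 0, H_3(M) = m_3·M, and H_4(M) = (m_1+m_2)·M. -/

import Mathlib

open MvPolynomial

noncomputable section

/-- The polynomial algebra `A = ℂ[x_1, …, x_26]`. -/
abbrev A : Type := MvPolynomial (Fin 26) ℂ

/-- The variable `x_r` (1-indexed), `0` out of range. -/
def x (r : ℕ) : A :=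
  if h : 1 ≤ r ∧ r ≤ 26 then X (⟨r - 1, by omega⟩ : Fin 26) else 0

/-- The partial derivative `∂_r` (1-indexed), `0` out of range. -/
def d (r : ℕ) (f : A) : A :=
  if h : 1 ≤ r ∧ r ≤ 26 then pderiv (⟨r - 1, by omega⟩ : Fin 26) f else 0

/-- Simple positive root vector actions. -/
def E1 (f : A) : A :=
  x 4 * d 6 f + x 5 * d 8 f + x 7 * d 9 f - x 18 * d 20 f - x 19 * d 22 f - x 21 * d 23 f

def E2 (f : A) : A :=
  x 3 * d 4 f + x 8 * d 10 f + x 9 * d 11 f - x 16 * d 18 f - x 17 * d 19 f - x 23 * d 24 f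

def E3 (f : A) : A :=
  -x 2 * d 3 f - x 4 * d 5 f - x 6 * d 8 f + x 10 * d 12 f + x 11 * (d 13 f - 2 * d 14 f)
    - x 14 * d 16 f - x 15 * d 17 f + x 19 * d 21 f + x 22 * d 23 f + x 24 * d 25 f

def E4 (f : A) : A :=
  -x 1 * d 2 f - x 5 * d 7 f - x 8 * d 9 f - x 10 * d 11 f + x 12 * (d 14 f - 2 * d 13 f)
    - x 13 * d 15 f + x 16 * d 17 f + x 18 * d 19 f + x 20 * d 22 f + x 25 * d 26 f

/-- Simple negative root vector actions. -/
def F1 (f : A) : A :=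
  -x 6 * d 4 f - x 8 * d 5 f - x 9 * d 7 f + x 20 * d 18 f + x 22 * d 19 f + x 23 * d 21 f

def F2 (f : A) : A :=
  -x 4 * d 3 f - x 10 * d 8 f - x 11 * d 9 f + x 18 * d 16 f + x 19 * d 17 f + x 24 * d 23 f

def F3 (f : A) : A :=
  x 3 * d 2 f + x 5 * d 4 f + x 8 * d 6 f - x 12 * d 10 f + x 14 * d 11 f
    + x 16 * (2 * d 14 f - d 13 f) + x 17 * d 15 f - x 21 * d 19 f - x 23 * d 22 f
    - x 25 * d 24 f

def F4 (f : A) : A :=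
  x 2 * d 1 f + x 7 * d 5 f + x 9 * d 8 f + x 11 * d 10 f + x 13 * d 12 f
    + x 15 * (2 * d 13 f - d 14 f) - x 17 * d 16 f - x 19 * d 18 f - x 22 * d 20 f
    - x 26 * d 25 f

/-- Cartan subalgebra basis actions. -/
def H1 (f : A) : A :=
  x 4 * d 4 f + x 5 * d 5 f - x 6 * d 6 f + x 7 * d 7 f - x 8 * d 8 f - x 9 * d 9 f
    + x 18 * d 18 f + x 19 * d 19 f - x 20 * d 20 f + x 21 * d 21 f - x 22 * d 22 f
    - x 23 * d 23 f

def H2 (f : A) : A :=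
  x 3 * d 3 f - x 4 * d 4 f + x 8 * d 8 f + x 9 * d 9 f - x 10 * d 10 f - x 11 * d 11 f
    + x 16 * d 16 f + x 17 * d 17 f - x 18 * d 18 f - x 19 * d 19 f + x 23 * d 23 f
    - x 24 * d 24 f

def H3 (f : A) : A :=
  x 2 * d 2 f - x 3 * d 3 f + x 4 * d 4 f - x 5 * d 5 f + x 6 * d 6 f - x 8 * d 8 f
    + x 10 * d 10 f + 2 * x 11 * d 11 f - x 12 * d 12 f + x 15 * d 15 f
    - 2 * x 16 * d 16 f - x 17 * d 17 f + x 19 * d 19 f - x 21 * d 21 f + x 22 * d 22 f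
    - x 23 * d 23 f + x 24 * d 24 f - x 25 * d 25 f

def H4 (f : A) : A :=
  x 1 * d 1 f - x 2 * d 2 f + x 5 * d 5 f - x 7 * d 7 f + x 8 * d 8 f - x 9 * d 9 f
    + x 10 * d 10 f - x 11 * d 11 f + 2 * x 12 * d 12 f - 2 * x 15 * d 15 f
    + x 16 * d 16 f - x 17 * d 17 f + x 18 * d 18 f - x 19 * d 19 f + x 20 * d 20 f
    - x 22 * d 22 f + x 25 * d 25 f - x 26 * d 26 f

/-- The singular vector `ζ_1`. -/
def zeta1 : A :=
  x 1 * (2 * x 13 + x 14) - 3 * x 2 * x 12 - 3 * x 3 * x 10 + 3 * x 4 * x 8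
    - 3 * x 5 * x 6

/-- The singular vector `ϑ`. -/
def theta : A :=
  x 1 * (-(x 2 * x 13) + x 1 * x 15 - x 3 * x 11 + x 4 * x 9 - x 6 * x 7)
    + x 2 * (x 2 * x 12 + x 3 * x 10 - x 4 * x 8 + x 5 * x 6)

/-- The quadratic invariant `η_1`. -/
def eta1 : A :=
  3 * ∑ r ∈ Finset.Icc 1 12, x r * x (27 - r) - x 13 ^ 2 - x 13 * x 14 - x 14 ^ 2

def zeta2 : A := F4 zeta1
def zeta3 : A := F3 zeta2
def zeta4 : A := -F2 zeta3
def zeta5 : A := F3 zeta4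
def zeta6 : A := -F1 zeta4
def zeta7 : A := F4 zeta5
def zeta8 : A := -F1 zeta5
def zeta9 : A := -F1 zeta7
def zeta10 : A := -F2 zeta8
def zeta11 : A := -F2 zeta9
def zeta12 : A := -F3 zeta10
def zeta13 : A := F4 zeta12
def zeta14 : A := F3 zeta11

/-- The algebra automorphism `τ` with `τ(x_r) = x_{27-r}` for `r ∉ {13,14}`,
`τ(x_13) = -x_13`, `τ(x_14) = -x_14` (0-indexed internally). -/
def tau : A →ₐ[ℂ] A :=
  aeval (fun i : Fin 26 =>
    if i.val = 12 then -X (⟨12, by omega⟩ : Fin 26)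
    else if i.val = 13 then -X (⟨13, by omega⟩ : Fin 26)
    else X (⟨25 - i.val, by omega⟩ : Fin 26))

/-- The family `ζ_r`, `1 ≤ r ≤ 26` (`0` out of range). -/
def zeta : ℕ → A := fun r =>
  match r with
  | 1 => zeta1 | 2 => zeta2 | 3 => zeta3 | 4 => zeta4 | 5 => zeta5 | 6 => zeta6
  | 7 => zeta7 | 8 => zeta8 | 9 => zeta9 | 10 => zeta10 | 11 => zeta11
  | 12 => zeta12 | 13 => zeta13 | 14 => zeta14
  | 15 => tau zeta12 | 16 => tau zeta11 | 17 => tau zeta10 | 18 => tau zeta9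
  | 19 => tau zeta8 | 20 => tau zeta7 | 21 => tau zeta6 | 22 => tau zeta5
  | 23 => tau zeta4 | 24 => tau zeta3 | 25 => tau zeta2 | 26 => tau zeta1
  | _ => 0

/-- The cubic invariant `η_2`. -/
def eta2 : A :=
  3 * ∑ r ∈ Finset.Icc 1 12, (zeta r * x (27 - r) + x r * zeta (27 - r))
    - 2 * x 13 * zeta 13 - x 13 * zeta 14 - x 14 * zeta 13 - 2 * x 14 * zeta 14

/-- The `F_4`-invariant Laplace operator `Δ`. -/
def Lap (f : A) : A :=
  3 * ∑ r ∈ Finset.Icc 1 12, d r (d (27 - r) f) - d 13 (d 13 f) - d 13 (d 14 f)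
    - d 14 (d 14 f)

/-- The weight of `x_r` in the basis of fundamental weights, `0` out of range. -/
def wt (r : ℕ) : ℤ × ℤ × ℤ × ℤ :=
  match r with
  | 1 => (0, 0, 0, 1) | 2 => (0, 0, 1, -1) | 3 => (0, 1, -1, 0) | 4 => (1, -1, 1, 0)
  | 5 => (1, 0, -1, 1) | 6 => (-1, 0, 1, 0) | 7 => (1, 0, 0, -1) | 8 => (-1, 1, -1, 1)
  | 9 => (-1, 1, 0, -1) | 10 => (0, -1, 1, 1) | 11 => (0, -1, 2, -1) | 12 => (0, 0, -1, 2)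
  | 15 => (0, 0, 1, -2) | 16 => (0, 1, -2, 1) | 17 => (0, 1, -1, -1) | 18 => (1, -1, 0, 1)
  | 19 => (1, -1, 1, -1) | 20 => (-1, 0, 0, 1) | 21 => (1, 0, -1, 0) | 22 => (-1, 0, 1, -1)
  | 23 => (-1, 1, -1, 0) | 24 => (0, -1, 1, 0) | 25 => (0, 0, -1, 1) | 26 => (0, 0, 0, -1)
  | _ => 0

/-- `f` is a linear combination of monomials of weight `n`. -/
abbrev IsWeight (f : A) (n : ℤ × ℤ × ℤ × ℤ) : Prop :=
  IsWeightedHomogeneous (fun i : Fin 26 => wt (i + 1)) f n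

theorem isWeight_x (r : ℕ) : IsWeight (x r) (wt r) := by
  unfold x
  split_ifs with h
  · convert! isWeightedHomogeneous_X ℂ (fun i : Fin 26 => wt (i + 1)) ⟨r - 1, by omega⟩ using 2
    change r = r - 1 + 1
    omega
  · exact isWeightedHomogeneous_zero ..

theorem IsWeight.d {f : A} {n : ℤ × ℤ × ℤ × ℤ} (hf : IsWeight f n) (r : ℕ) :
    IsWeight (d r f) (n - wt r) := by
  unfold _root_.d
  split_ifs with h
  · refine IsWeightedHomogeneous.pderiv hf ?_
    change n - wt r + wt (r - 1 + 1) = n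
    rw [Nat.sub_add_cancel h.1, sub_add_cancel]
  · exact isWeightedHomogeneous_zero ..

theorem IsWeight.mul_eq {f g : A} {m n k : ℤ × ℤ × ℤ × ℤ} (hf : IsWeight f m)
    (hg : IsWeight g n) (h : m + n = k) : IsWeight (f * g) k :=
  h ▸ IsWeightedHomogeneous.mul hf hg

theorem isWeight_ofNat (k : ℕ) [k.AtLeastTwo] : IsWeight (OfNat.ofNat k : A) 0 := by
  rw [← map_ofNat C k]
  exact isWeightedHomogeneous_C _ _

theorem IsWeight.ofNat_mul {f : A} {n : ℤ × ℤ × ℤ × ℤ} (k : ℕ) [k.AtLeastTwo]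
    (hf : IsWeight f n) : IsWeight ((OfNat.ofNat k : A) * f) n :=
  (isWeight_ofNat k).mul_eq hf (zero_add n)

theorem IsWeight.x_mul_d {f : A} {n k : ℤ × ℤ × ℤ × ℤ} (hf : IsWeight f n) {a b : ℕ}
    (h : wt a + k = wt b) : IsWeight (x a * _root_.d b f) (n - k) :=
  (isWeight_x a).mul_eq (hf.d b) (by rw [← h]; abel)

theorem IsWeight.F1 {f : A} {n : ℤ × ℤ × ℤ × ℤ} (hf : IsWeight f n) :
    IsWeight (F1 f) (n - (2, -1, 0, 0)) := by
  simp only [_root_.F1, neg_mul]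
  repeat' first
    | apply IsWeightedHomogeneous.add
    | apply IsWeightedHomogeneous.sub
    | apply IsWeightedHomogeneous.neg
  all_goals exact hf.x_mul_d (by decide)

theorem IsWeight.F2 {f : A} {n : ℤ × ℤ × ℤ × ℤ} (hf : IsWeight f n) :
    IsWeight (F2 f) (n - (-1, 2, -2, 0)) := by
  simp only [_root_.F2, neg_mul]
  repeat' first
    | apply IsWeightedHomogeneous.add
    | apply IsWeightedHomogeneous.sub
    | apply IsWeightedHomogeneous.neg
  all_goals exact hf.x_mul_d (by decide)

theorem IsWeight.F3 {f : A} {n : ℤ × ℤ × ℤ × ℤ} (hf : IsWeight f n) :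
    IsWeight (F3 f) (n - (0, -1, 2, -1)) := by
  simp only [_root_.F3, mul_sub, two_mul, mul_add]
  repeat' first
    | apply IsWeightedHomogeneous.add
    | apply IsWeightedHomogeneous.sub
  all_goals exact hf.x_mul_d (by decide)

theorem IsWeight.F4 {f : A} {n : ℤ × ℤ × ℤ × ℤ} (hf : IsWeight f n) :
    IsWeight (F4 f) (n - (0, 0, -1, 2)) := by
  simp only [_root_.F4, mul_sub, two_mul, mul_add]
  repeat' first
    | apply IsWeightedHomogeneous.add
    | apply IsWeightedHomogeneous.sub
  all_goals exact hf.x_mul_d (by decide)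

theorem isWeight_tau_X (i : Fin 26) : IsWeight (tau (X i)) (-wt (i + 1)) := by
  rw [tau, aeval_X]
  split_ifs with h₁ h₂
  · rw [h₁]
    exact (isWeightedHomogeneous_X ..).neg
  · rw [h₂]
    exact (isWeightedHomogeneous_X ..).neg
  · convert! isWeightedHomogeneous_X ℂ (fun i : Fin 26 => wt (i + 1)) ⟨25 - i, by omega⟩ using 1
    revert i
    decide

theorem IsWeight.tau {f : A} {n : ℤ × ℤ × ℤ × ℤ} (hf : IsWeight f n) :
    IsWeight (tau f) (-n) := by
  rw [f.as_sum, map_sum]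
  refine IsWeightedHomogeneous.sum _ _ _ fun s hs => ?_
  rw [monomial_eq, map_mul, Finsupp.prod, map_prod, ← algebraMap_eq, AlgHom.commutes]
  refine IsWeight.mul_eq (isWeightedHomogeneous_C _ _)
    (IsWeightedHomogeneous.prod _ _ (fun i : Fin 26 => s i • -wt (i + 1)) fun i _ => ?_) ?_
  · rw [map_pow]
    exact (isWeight_tau_X i).pow _
  · rw [← hf (mem_support_iff.mp hs), Finsupp.weight_apply, Finsupp.sum, zero_add,
      ← Finset.sum_neg_distrib]
    exact Finset.sum_congr rfl fun i _ => smul_neg ..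

theorem isWeight_zeta1 : IsWeight zeta1 (wt 1) := by
  unfold zeta1
  simp only [mul_add]
  repeat' first
    | apply IsWeightedHomogeneous.add
    | apply IsWeightedHomogeneous.sub
    | apply IsWeight.mul_eq
    | apply isWeight_x
    | apply isWeight_ofNat
  all_goals first
    | with_reducible rfl
    | decide

theorem isWeight_theta : IsWeight theta (0, 0, 1, 0) := by
  unfold theta
  simp only [mul_add, mul_sub, mul_neg]
  repeat' first
    | apply IsWeightedHomogeneous.add
    | apply IsWeightedHomogeneous.sub
    | apply IsWeightedHomogeneous.neg
    | apply IsWeight.mul_eq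
    | apply isWeight_x
  all_goals first
    | with_reducible rfl
    | decide

theorem wt_compl {r : ℕ} (hr : r ∈ Finset.Icc 1 12) : wt r + wt (27 - r) = 0 := by
  revert r
  decide

theorem isWeight_eta1 : IsWeight eta1 0 := by
  unfold eta1
  simp only [sq]
  refine .sub (.sub (.sub (IsWeight.ofNat_mul 3 (.sum _ _ _ fun r hr => ?_)) ?_) ?_) ?_
  · exact (isWeight_x r).mul_eq (isWeight_x _) (wt_compl hr)
  all_goals exact (isWeight_x _).mul_eq (isWeight_x _) (by decide)

theorem isWeight_zeta2 : IsWeight zeta2 (wt 2) := isWeight_zeta1.F4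
theorem isWeight_zeta3 : IsWeight zeta3 (wt 3) := isWeight_zeta2.F3
theorem isWeight_zeta4 : IsWeight zeta4 (wt 4) := isWeight_zeta3.F2.neg
theorem isWeight_zeta5 : IsWeight zeta5 (wt 5) := isWeight_zeta4.F3
theorem isWeight_zeta6 : IsWeight zeta6 (wt 6) := isWeight_zeta4.F1.neg
theorem isWeight_zeta7 : IsWeight zeta7 (wt 7) := isWeight_zeta5.F4
theorem isWeight_zeta8 : IsWeight zeta8 (wt 8) := isWeight_zeta5.F1.neg
theorem isWeight_zeta9 : IsWeight zeta9 (wt 9) := isWeight_zeta7.F1.neg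
theorem isWeight_zeta10 : IsWeight zeta10 (wt 10) := isWeight_zeta8.F2.neg
theorem isWeight_zeta11 : IsWeight zeta11 (wt 11) := isWeight_zeta9.F2.neg
theorem isWeight_zeta12 : IsWeight zeta12 (wt 12) := isWeight_zeta10.F3.neg
theorem isWeight_zeta13 : IsWeight zeta13 (wt 13) := isWeight_zeta12.F4
theorem isWeight_zeta14 : IsWeight zeta14 (wt 14) := isWeight_zeta11.F3

theorem isWeight_zeta (r : ℕ) : IsWeight (zeta r) (wt r) := by
  unfold zeta
  split
  exacts [isWeight_zeta1, isWeight_zeta2, isWeight_zeta3, isWeight_zeta4, isWeight_zeta5,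
    isWeight_zeta6, isWeight_zeta7, isWeight_zeta8, isWeight_zeta9, isWeight_zeta10,
    isWeight_zeta11, isWeight_zeta12, isWeight_zeta13, isWeight_zeta14, isWeight_zeta12.tau,
    isWeight_zeta11.tau, isWeight_zeta10.tau, isWeight_zeta9.tau, isWeight_zeta8.tau,
    isWeight_zeta7.tau, isWeight_zeta6.tau, isWeight_zeta5.tau, isWeight_zeta4.tau,
    isWeight_zeta3.tau, isWeight_zeta2.tau, isWeight_zeta1.tau, isWeightedHomogeneous_zero ..]

theorem isWeight_eta2 : IsWeight eta2 0 := by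
  unfold eta2
  simp only [mul_assoc]
  refine .sub (.sub (.sub (.sub (IsWeight.ofNat_mul 3 (.sum _ _ _ fun r hr => .add ?_ ?_))
    (IsWeight.ofNat_mul 2 ?_)) ?_) ?_) (IsWeight.ofNat_mul 2 ?_)
  · exact (isWeight_zeta r).mul_eq (isWeight_x _) (wt_compl hr)
  · exact (isWeight_x r).mul_eq (isWeight_zeta _) (wt_compl hr)
  all_goals exact (isWeight_x _).mul_eq (isWeight_zeta _) (by decide)

/-- Euler's identity for polynomials that are homogeneous for a weight in an arbitrary additive
monoid, contracted with an additive functional on the weights. -/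
theorem MvPolynomial.IsWeightedHomogeneous.sum_map_weight_smul_X_mul_pderiv
    {σ R M : Type*} [Fintype σ] [CommRing R] [AddCommMonoid M] {w : σ → M} {n : M}
    {f : MvPolynomial σ R} (hf : f.IsWeightedHomogeneous w n) (φ : M →+ R) :
    ∑ i, φ (w i) • (X i * pderiv i f) = φ n • f := by
  have key : ∀ s ∈ f.support, ∑ i, φ (w i) • (X i * pderiv i (monomial s (coeff s f))) =
      φ n • monomial s (coeff s f) := by
    intro s hs
    simp_rw [X_mul_pderiv_monomial, ← Nat.cast_smul_eq_nsmul R, smul_smul, ← Finset.sum_smul]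
    rw [← hf (mem_support_iff.mp hs), Finsupp.weight_apply,
      Finsupp.sum_fintype _ _ (fun i => zero_smul ℕ (w i)), map_sum]
    simp_rw [map_nsmul, nsmul_eq_mul, mul_comm]
  conv_lhs => rw [f.as_sum]
  conv_rhs => rw [f.as_sum]
  simp_rw [map_sum, Finset.mul_sum, Finset.smul_sum]
  rw [Finset.sum_comm]
  exact Finset.sum_congr rfl fun s hs => by rw [← key s hs]

theorem IsWeight.H1 {f : A} {n : ℤ × ℤ × ℤ × ℤ} (hf : IsWeight f n) :
    H1 f = (n.1 : ℂ) • f := by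
  have h := hf.sum_map_weight_smul_X_mul_pderiv
    ((Int.castAddHom ℂ).comp (AddMonoidHom.fst ℤ (ℤ × ℤ × ℤ)))
  refine Eq.trans ?_ h
  simp [_root_.H1, Fin.sum_univ_succ, wt, x, _root_.d]
  ring

theorem IsWeight.H2 {f : A} {n : ℤ × ℤ × ℤ × ℤ} (hf : IsWeight f n) :
    H2 f = (n.2.1 : ℂ) • f := by
  have h := hf.sum_map_weight_smul_X_mul_pderiv
    ((Int.castAddHom ℂ).comp ((AddMonoidHom.fst ℤ (ℤ × ℤ)).comp (AddMonoidHom.snd ℤ _)))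
  refine Eq.trans ?_ h
  simp [_root_.H2, Fin.sum_univ_succ, wt, x, _root_.d]
  ring

theorem IsWeight.H3 {f : A} {n : ℤ × ℤ × ℤ × ℤ} (hf : IsWeight f n) :
    H3 f = (n.2.2.1 : ℂ) • f := by
  have h := hf.sum_map_weight_smul_X_mul_pderiv
    ((Int.castAddHom ℂ).comp ((AddMonoidHom.fst ℤ ℤ).comp
      ((AddMonoidHom.snd ℤ (ℤ × ℤ)).comp (AddMonoidHom.snd ℤ _))))
  refine Eq.trans ?_ h
  simp [_root_.H3, Fin.sum_univ_succ, wt, x, _root_.d, ofNat_smul_eq_nsmul]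
  ring

theorem IsWeight.H4 {f : A} {n : ℤ × ℤ × ℤ × ℤ} (hf : IsWeight f n) :
    H4 f = (n.2.2.2 : ℂ) • f := by
  have h := hf.sum_map_weight_smul_X_mul_pderiv
    ((Int.castAddHom ℂ).comp ((AddMonoidHom.snd ℤ ℤ).comp
      ((AddMonoidHom.snd ℤ (ℤ × ℤ)).comp (AddMonoidHom.snd ℤ _))))
  refine Eq.trans ?_ h
  simp [_root_.H4, Fin.sum_univ_succ, wt, x, _root_.d, ofNat_smul_eq_nsmul]
  ring

/-- `x_1^{m_1} ζ_1^{m_2} ϑ^{m_3} η_1^{m_4} η_2^{m_5}` is a weight vector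
of weight `m_3 λ_3 + (m_1 + m_2) λ_4`. -/
theorem stmt17 (m1 m2 m3 m4 m5 : ℕ) :
    H1 (x 1 ^ m1 * zeta1 ^ m2 * theta ^ m3 * eta1 ^ m4 * eta2 ^ m5) = 0 ∧
    H2 (x 1 ^ m1 * zeta1 ^ m2 * theta ^ m3 * eta1 ^ m4 * eta2 ^ m5) = 0 ∧
    H3 (x 1 ^ m1 * zeta1 ^ m2 * theta ^ m3 * eta1 ^ m4 * eta2 ^ m5) =
      (m3 : ℂ) • (x 1 ^ m1 * zeta1 ^ m2 * theta ^ m3 * eta1 ^ m4 * eta2 ^ m5) ∧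
    H4 (x 1 ^ m1 * zeta1 ^ m2 * theta ^ m3 * eta1 ^ m4 * eta2 ^ m5) =
      ((m1 + m2 : ℕ) : ℂ) • (x 1 ^ m1 * zeta1 ^ m2 * theta ^ m3 * eta1 ^ m4 * eta2 ^ m5) := by
  have hM : IsWeight (x 1 ^ m1 * zeta1 ^ m2 * theta ^ m3 * eta1 ^ m4 * eta2 ^ m5)
      (0, 0, m3, (m1 + m2 : ℕ)) := by
    convert! (((((isWeight_x 1).pow m1).mul (isWeight_zeta1.pow m2)).mul
      (isWeight_theta.pow m3)).mul (isWeight_eta1.pow m4)).mul (isWeight_eta2.pow m5) using 1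
    simp [wt]
  refine ⟨?_, ?_, ?_, ?_⟩
  · simpa using hM.H1
  · simpa using hM.H2
  · simpa using hM.H3
  · simpa using hM.H4
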